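/- Let n ≥ 1, let 1 < p < ∞, and let k : ℤⁿ → ℂ. There exists a constant C ≥ 0 such that ‖k ⋆ f‖_{ℓ^{p,∞}(ℤⁿ)} ≤ C · ‖f‖_{ℓ¹(ℤⁿ)} for every finitely supported f : ℤⁿ → ℂ if and only if k ∈ ℓ^{p,∞}(ℤⁿ). -/

import Mathlib

/-!
If the inequality holds, testing it on the unit mass at the origin gives `k` itself on the left
and `1` on the right, so `k` has finite weak norm.

Conversely let `M = ‖k‖_{ℓ^{p,∞}}`, `F = ‖f‖_{ℓ¹} > 0`, and fix a height `t > 0`. Cut `k` at the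
height `s = t / (2F)`. The low part of `k` contributes at most `s * F = t / 2` to `k ⋆ f` at every
point. The high part is summable because `p > 1`: a dyadic decomposition of its range gives an
`ℓ¹` norm of at most `A * s * (M / s) ^ p` with `A` depending only on `p` (`tsum_high_le`). By
Chebyshev's inequality and Tonelli's theorem,
`card {|k ⋆ f| > t} ≤ (t / 2)⁻¹ * F * A * s * (M / s) ^ p = A * (M / s) ^ p`,
and hence `t * card {|k ⋆ f| > t} ^ (1 / p) ≤ 2 * A ^ (1 / p) * M * F`.
-/

open MeasureTheory ENNReal NNReal

/-- The weak `ℓ^{p,∞}` (quasi-)norm of a function on a discrete space: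
`sup_{α>0} α · (card {m : |f m| > α})^{1/p}`, where `card` is the counting measure. -/
noncomputable def weakNorm {α : Type*} [MeasurableSpace α] {E : Type*} [NormedAddCommGroup E]
    (f : α → E) (p : ℝ) : ℝ≥0∞ :=
  ⨆ t : ℝ≥0, (t : ℝ≥0∞) * (Measure.count {m | (t : ℝ) < ‖f m‖}) ^ (1 / p)

/-- The `ℓ¹` norm of `f`. -/
noncomputable def l1Norm {α : Type*} {E : Type*} [NormedAddCommGroup E] (f : α → E) : ℝ≥0∞ :=
  ∑' m, (‖f m‖₊ : ℝ≥0∞)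

/-- The discrete convolution `(k ⋆ f)(m) = Σ_j k (m - j) * f j` on `ℤⁿ`. -/
noncomputable def conv {n : ℕ} (k f : (Fin n → ℤ) → ℂ) : (Fin n → ℤ) → ℂ :=
  fun m => ∑' j, k (m - j) * f j

/-- The part of `k` above the height `s`, in absolute value. -/
noncomputable def highPart {α : Type*} (k : α → ℂ) (s : ℝ≥0) (m : α) : ℝ≥0∞ :=
  if s < ‖k m‖₊ then (‖k m‖₊ : ℝ≥0∞) else 0

/-- The constant in the `ℓ¹` bound for the high part of a weak `ℓ^p` function. -/
noncomputable def highConst (p : ℝ) : ℝ≥0∞ := 2 * (1 - (2 : ℝ≥0∞) ^ (1 - p))⁻¹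

lemma highConst_ne_top {p : ℝ} (hp : 1 < p) : highConst p ≠ ⊤ := by
  unfold highConst
  refine ENNReal.mul_ne_top (by simp) (ENNReal.inv_ne_top.2 ?_)
  have : (2 : ℝ≥0∞) ^ (1 - p) < 1 :=
    ENNReal.rpow_lt_one_of_one_lt_of_neg (by norm_num) (by linarith)
  exact (tsub_pos_of_lt this).ne'

lemma count_le_weakNorm {α : Type*} [MeasurableSpace α] (k : α → ℂ) {p : ℝ} (hp : 1 < p)
    {s : ℝ≥0} (hs : 0 < s) :
    Measure.count {m | (s : ℝ) < ‖k m‖} ≤ (weakNorm k p / s) ^ p := by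
  have h : (s : ℝ≥0∞) * (Measure.count {m | (s : ℝ) < ‖k m‖}) ^ (1 / p) ≤ weakNorm k p :=
    le_iSup (fun t : ℝ≥0 => (t : ℝ≥0∞) * (Measure.count {m | (t : ℝ) < ‖k m‖}) ^ (1 / p)) s
  have h' : (Measure.count {m | (s : ℝ) < ‖k m‖}) ^ (1 / p) ≤ weakNorm k p / s := by
    rw [ENNReal.le_div_iff_mul_le (Or.inl (by simpa using hs.ne')) (Or.inl (by simp)), mul_comm]
    exact h
  have := ENNReal.rpow_le_rpow h' (by linarith : (0 : ℝ) ≤ p)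
  rwa [← ENNReal.rpow_mul, one_div_mul_cancel (by linarith), ENNReal.rpow_one] at this

/-- Dyadic decomposition of the range above `s`: a value in `(2 ^ i * s, 2 ^ (i + 1) * s]` is
controlled by the `i`-th summand. -/
lemma highPart_le_tsum {α : Type*} (k : α → ℂ) {s : ℝ≥0} (hs : 0 < s) (m : α) :
    highPart k s m ≤ ∑' i : ℕ, (2 ^ (i + 1) * s : ℝ≥0∞) *
      Set.indicator {m | ((2 ^ i * s : ℝ≥0) : ℝ) < ‖k m‖} 1 m := by
  unfold highPart
  split_ifs with h
  · have hex : ∃ i : ℕ, ‖k m‖₊ ≤ 2 ^ i * s := by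
      obtain ⟨i, hi⟩ := pow_unbounded_of_one_lt (‖k m‖₊ / s) (one_lt_two)
      exact ⟨i, ((div_lt_iff₀ hs).1 hi).le⟩
    classical
    -- The least `i` with `|k m| ≤ 2 ^ i * s` is positive, and its predecessor is the level sought.
    have hspec := Nat.find_spec hex
    have hmin := fun j => @Nat.find_min _ _ hex j
    obtain ⟨j, hj⟩ : ∃ j, Nat.find hex = j + 1 := by
      refine Nat.exists_eq_succ_of_ne_zero fun h0 => ?_
      rw [h0, pow_zero, one_mul] at hspec
      exact absurd hspec (not_le.2 h)
    rw [hj] at hspec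
    have hlt : 2 ^ j * s < ‖k m‖₊ := not_le.1 (hmin j (by omega))
    refine le_trans ?_ (ENNReal.le_tsum j)
    have hmem : m ∈ {m | ((2 ^ j * s : ℝ≥0) : ℝ) < ‖k m‖} := by
      exact_mod_cast hlt
    rw [Set.indicator_of_mem hmem, Pi.one_apply, mul_one]
    exact_mod_cast hspec
  · exact zero_le

/-- The high part of a weak `ℓ^p` function is summable, since `p > 1` makes the dyadic series
geometric with ratio `2 ^ (1 - p) < 1`. -/
lemma tsum_high_le {α : Type*} [MeasurableSpace α] [MeasurableSingletonClass α] [Countable α]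
    (k : α → ℂ) {p : ℝ} (hp : 1 < p) {s : ℝ≥0} (hs : 0 < s) :
    ∑' m, highPart k s m ≤ highConst p * s * (weakNorm k p / s) ^ p := by
  have hcount : ∀ r : ℝ≥0, ∑' m, Set.indicator {m | (r : ℝ) < ‖k m‖} (1 : α → ℝ≥0∞) m
      = Measure.count {m | (r : ℝ) < ‖k m‖} := by
    intro r
    rw [← lintegral_indicator_one (Set.to_countable _).measurableSet, lintegral_count]
  have hterm : ∀ i : ℕ, (2 ^ (i + 1) * s : ℝ≥0∞) * (weakNorm k p / (2 ^ i * s : ℝ≥0)) ^ p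
      = 2 * s * (weakNorm k p / s) ^ p * ((2 : ℝ≥0∞) ^ (1 - p)) ^ i := by
    intro i
    have h1 : weakNorm k p / ((2 ^ i * s : ℝ≥0) : ℝ≥0∞) = (2 ^ i)⁻¹ * (weakNorm k p / s) := by
      push_cast
      rw [div_eq_mul_inv, div_eq_mul_inv,
        ENNReal.mul_inv (Or.inl (by simp)) (Or.inl (by simp))]
      ring
    have h2 : ((2 : ℝ≥0∞) ^ (1 - p)) ^ i = 2 ^ i * ((2 ^ i)⁻¹) ^ p := by
      rw [← ENNReal.rpow_natCast (2 ^ (1 - p)), ← ENNReal.rpow_natCast 2 i, ← ENNReal.rpow_neg,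
        ← ENNReal.rpow_mul, ← ENNReal.rpow_mul, ← ENNReal.rpow_add _ _ (by simp) (by simp)]
      congr 1
      ring
    rw [h1, ENNReal.mul_rpow_of_nonneg _ _ (by linarith : (0 : ℝ) ≤ p), h2]
    ring
  calc ∑' m, highPart k s m
      ≤ ∑' m, ∑' i : ℕ, (2 ^ (i + 1) * s : ℝ≥0∞) *
          Set.indicator {m | ((2 ^ i * s : ℝ≥0) : ℝ) < ‖k m‖} 1 m :=
        ENNReal.tsum_le_tsum (highPart_le_tsum k hs)
    _ = ∑' i : ℕ, (2 ^ (i + 1) * s : ℝ≥0∞) *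
          Measure.count {m | ((2 ^ i * s : ℝ≥0) : ℝ) < ‖k m‖} := by
        rw [ENNReal.tsum_comm]
        simp_rw [ENNReal.tsum_mul_left, hcount]
    _ ≤ ∑' i : ℕ, (2 ^ (i + 1) * s : ℝ≥0∞) * (weakNorm k p / (2 ^ i * s : ℝ≥0)) ^ p := by
        gcongr with i
        exact count_le_weakNorm k hp (by positivity)
    _ = highConst p * s * (weakNorm k p / s) ^ p := by
        simp_rw [hterm]
        rw [ENNReal.tsum_mul_left, ENNReal.tsum_geometric, highConst]
        ring

/-- Splitting the kernel at height `s`: the low part contributes at most `s * ‖f‖_{ℓ¹}`. No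
summability is needed, since a divergent sum defining `conv` takes the value `0`. -/
lemma nnnorm_conv_le {n : ℕ} (k f : (Fin n → ℤ) → ℂ) (s : ℝ≥0) (m : Fin n → ℤ) :
    (‖conv k f m‖₊ : ℝ≥0∞) ≤ s * l1Norm f + ∑' j, highPart k s (m - j) * ‖f j‖₊ := by
  have h1 : (‖conv k f m‖₊ : ℝ≥0∞) ≤ ∑' j, (‖k (m - j) * f j‖₊ : ℝ≥0∞) := by
    unfold conv
    exact enorm_tsum_le_tsum_enorm (f := fun j => k (m - j) * f j)
  refine h1.trans ?_
  rw [l1Norm, ← ENNReal.tsum_mul_left, ← ENNReal.tsum_add]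
  refine ENNReal.tsum_le_tsum fun j => ?_
  rw [nnnorm_mul, ENNReal.coe_mul, ← add_mul]
  gcongr
  unfold highPart
  split_ifs with h
  · exact le_add_self
  · rw [add_zero]
    exact_mod_cast not_lt.1 h

lemma tsum_high_conv {n : ℕ} (k f : (Fin n → ℤ) → ℂ) (s : ℝ≥0) :
    ∑' m, ∑' j, highPart k s (m - j) * ‖f j‖₊ = (∑' m, highPart k s m) * l1Norm f := by
  rw [ENNReal.tsum_comm, l1Norm, ← ENNReal.tsum_mul_left]
  refine tsum_congr fun j => ?_
  rw [ENNReal.tsum_mul_right, ← (Equiv.subRight j).tsum_eq (highPart k s)]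
  rfl

lemma weakNorm_conv_le {n : ℕ} {p : ℝ} (hp : 1 < p) (k f : (Fin n → ℤ) → ℂ)
    (hf : l1Norm f ≠ ⊤) :
    weakNorm (conv k f) p ≤ 2 * highConst p ^ (1 / p) * weakNorm k p * l1Norm f := by
  have hp0 : 0 < p := by linarith
  refine iSup_le fun t => ?_
  rcases eq_or_ne t 0 with rfl | ht
  · simp
  have ht0 : 0 < t := pos_iff_ne_zero.2 ht
  obtain ⟨F, hF⟩ : ∃ F : ℝ≥0, (F : ℝ≥0∞) = l1Norm f := ⟨_, ENNReal.coe_toNNReal hf⟩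
  rcases eq_or_ne F 0 with rfl | hF0
  · have hz : ∀ m, ¬ (t : ℝ) < ‖conv k f m‖ := by
      intro m
      have hfz : ∀ j, f j = 0 := by
        have := hF.symm
        rw [l1Norm, ENNReal.coe_zero, ENNReal.tsum_eq_zero] at this
        simpa using this
      simp [conv, hfz]
    simp [hz, hp0]
  have hFpos : 0 < F := pos_iff_ne_zero.2 hF0
  -- With this height the low part contributes exactly `s * F = t / 2`.
  set s : ℝ≥0 := t / (2 * F) with hs_def
  have hs : 0 < s := by positivity
  have hsF : s * F = t / 2 := by rw [hs_def]; field_simp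
  have hsub : {m | (t : ℝ) < ‖conv k f m‖} ⊆
      {m | ((s * F : ℝ≥0) : ℝ≥0∞) ≤ ∑' j, highPart k s (m - j) * ‖f j‖₊} := by
    intro m hm
    have hm' : (t : ℝ≥0∞) < ‖conv k f m‖₊ := by
      rw [ENNReal.coe_lt_coe]; exact hm
    have h := hm'.le.trans (nnnorm_conv_le k f s m)
    have htt : (t : ℝ≥0∞) = (s * F : ℝ≥0) + (s * F : ℝ≥0) := by
      rw [← ENNReal.coe_add, hsF, add_halves]
    rw [htt, ← hF, ← ENNReal.coe_mul] at h
    exact (ENNReal.add_le_add_iff_left ENNReal.coe_ne_top).1 h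
  have hsE : (s : ℝ≥0∞) ≠ 0 := by simpa using hs.ne'
  have hFE : (F : ℝ≥0∞) ≠ 0 := by simpa using hF0
  have hcnt : Measure.count {m | (t : ℝ) < ‖conv k f m‖} ≤
      highConst p * (weakNorm k p / s) ^ p := by
    refine (measure_mono hsub).trans ?_
    refine (ENNReal.count_const_le_le_of_tsum_le (Measurable.of_discrete)
      (c := highConst p * s * (weakNorm k p / s) ^ p * F) ?_ ?_ ENNReal.coe_ne_top).trans ?_
    · rw [tsum_high_conv, ← hF]
      gcongr
      exact tsum_high_le k hp hs
    · simp [hs.ne', hF0]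
    · rw [ENNReal.coe_mul]
      refine ENNReal.div_le_of_le_mul (le_of_eq ?_)
      ring
  calc (t : ℝ≥0∞) * Measure.count {m | (t : ℝ) < ‖conv k f m‖} ^ (1 / p)
      ≤ t * (highConst p * (weakNorm k p / s) ^ p) ^ (1 / p) := by gcongr
    _ = t * (highConst p ^ (1 / p) * (weakNorm k p / s)) := by
        rw [ENNReal.mul_rpow_of_nonneg _ _ (by positivity), ← ENNReal.rpow_mul,
          mul_one_div_cancel hp0.ne', ENNReal.rpow_one]
    _ = 2 * highConst p ^ (1 / p) * weakNorm k p * l1Norm f := by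
        have htt : (t : ℝ≥0∞) = 2 * F * s := by
          have : t = 2 * F * s := by rw [hs_def]; field_simp
          exact_mod_cast this
        have hc : (s : ℝ≥0∞) * (weakNorm k p / s) = weakNorm k p :=
          ENNReal.mul_div_cancel hsE ENNReal.coe_ne_top
        rw [← hF, htt]
        calc 2 * (F : ℝ≥0∞) * s * (highConst p ^ (1 / p) * (weakNorm k p / s))
            = 2 * F * highConst p ^ (1 / p) * (s * (weakNorm k p / s)) := by ring
          _ = _ := by rw [hc]; ring

/-- The discrete Fourier multiplier `f ↦ k ⋆ f` satisfies the weak `(1,p)` inequality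
`‖k ⋆ f‖_{ℓ^{p,∞}} ≤ C ‖f‖_{ℓ¹}` for all finitely supported `f` (for some constant `C ≥ 0`)
if and only if `k ∈ ℓ^{p,∞}(ℤⁿ)`. -/
theorem weak1p_characterisation (n : ℕ) (hn : 1 ≤ n) (p : ℝ) (hp : 1 < p)
    (k : (Fin n → ℤ) → ℂ) :
    (∃ C : ℝ, 0 ≤ C ∧ ∀ f : (Fin n → ℤ) → ℂ, (Function.support f).Finite →
      weakNorm (conv k f) p ≤ ENNReal.ofReal C * l1Norm f) ↔ weakNorm k p < ⊤ := by
  constructor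
  · rintro ⟨C, -, hC⟩
    have hconv : conv k (Pi.single 0 1) = k := by
      funext m
      unfold conv
      rw [tsum_eq_single 0 (fun j hj => by simp [Pi.single_eq_of_ne hj])]
      simp
    have hl1 : l1Norm (Pi.single 0 1 : (Fin n → ℤ) → ℂ) = 1 := by
      unfold l1Norm
      rw [tsum_eq_single 0 (fun j hj => by simp [Pi.single_eq_of_ne hj])]
      simp
    have h := hC (Pi.single 0 1) ((Set.finite_singleton 0).subset Pi.support_single_subset)
    rw [hconv, hl1, mul_one] at h
    exact h.trans_lt ENNReal.ofReal_lt_top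
  · intro hk
    have hfin : 2 * highConst p ^ (1 / p) * weakNorm k p ≠ ⊤ :=
      ENNReal.mul_ne_top (ENNReal.mul_ne_top (by simp)
        (ENNReal.rpow_ne_top_of_nonneg (by positivity) (highConst_ne_top hp))) hk.ne
    refine ⟨(2 * highConst p ^ (1 / p) * weakNorm k p).toReal, ENNReal.toReal_nonneg,
      fun f hf => ?_⟩
    rw [ENNReal.ofReal_toReal hfin]
    refine weakNorm_conv_le hp k f ?_
    rw [l1Norm, tsum_eq_sum (s := hf.toFinset) (fun j hj => by simpa using hj)]
    exact ENNReal.sum_ne_top.2 fun j _ => ENNReal.coe_ne_top
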